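/- Let k, γ > 1 and t ≥ γ. Define h_{k,γ} : ℝ → ℝ by h_{k,γ}(s) = |s|^{γ−1}s if |s| ≤ k and h_{k,γ}(s) = γk^{γ−1}s − sign(s)(1−γ)k^γ if |s| > k, and Φ_{k,t,γ}(s) = ∫_0^s |h'_{k,γ}(r)|^{t/γ} dr. Then for every s ∈ ℝ, |Φ_{k,t,γ}(s)| ≤ C |h_{k,γ}(s)|^{(1/γ)(1 + t(γ−1)/γ)}, where C = max{γ^{(t−1)/γ}, γ/(1 + t(γ−1)/γ)}; in particular C does not depend on k. -/

import Mathlib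

noncomputable section

/-- The truncated power function `h_{k,γ}`. -/
noncomputable def hkg (k γ s : ℝ) : ℝ :=
  if |s| ≤ k then |s| ^ (γ - 1) * s
  else γ * k ^ (γ - 1) * s - Real.sign s * ((1 - γ) * k ^ γ)

/-- The derivative of `h_{k,γ}`: `h'_{k,γ}(s) = γ|s|^{γ-1}` for `|s| ≤ k` and
`h'_{k,γ}(s) = γ k^{γ-1}` for `|s| > k`. -/
noncomputable def hkgDeriv (k γ s : ℝ) : ℝ :=
  if |s| ≤ k then γ * |s| ^ (γ - 1) else γ * k ^ (γ - 1)

/-- `Φ_{k,t,γ}(s) = ∫₀ˢ |h'_{k,γ}(r)|^{t/γ} dr`. -/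
noncomputable def PhiKTG (k t γ s : ℝ) : ℝ :=
  ∫ r in (0:ℝ)..s, |hkgDeriv k γ r| ^ (t / γ)

lemma hkgDeriv_neg (k γ s : ℝ) : hkgDeriv k γ (-s) = hkgDeriv k γ s := by
  simp [hkgDeriv]

lemma hkg_neg (k γ s : ℝ) : hkg k γ (-s) = - hkg k γ s := by
  unfold hkg
  rw [abs_neg, Real.sign_neg]
  split_ifs <;> ring

lemma PhiKTG_neg (k t γ s : ℝ) : PhiKTG k t γ (-s) = - PhiKTG k t γ s := by
  unfold PhiKTG
  have h := intervalIntegral.integral_comp_neg (a := 0) (b := s)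
    (fun r => |hkgDeriv k γ r| ^ (t / γ))
  simp only [hkgDeriv_neg, neg_zero] at h
  rw [h, intervalIntegral.integral_symm]

lemma aux_nonneg (k γ t : ℝ) (hk : 1 < k) (hγ : 1 < γ) (ht : γ ≤ t) (s : ℝ) (hs : 0 ≤ s) :
    |PhiKTG k t γ s| ≤ γ ^ ((t - 1) / γ) *
          |hkg k γ s| ^ ((1 / γ) * (1 + t * ((γ - 1) / γ))) := by
  have hγ0 : 0 < γ := by linarith
  have hk0 : 0 < k := by linarith
  set m : ℝ := 1 + t * ((γ - 1) / γ) with hm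
  have hmγ : γ ≤ m := by
    have h1 : γ * ((γ - 1) / γ) = γ - 1 := by field_simp
    have h2 : γ * ((γ - 1) / γ) ≤ t * ((γ - 1) / γ) :=
      mul_le_mul_of_nonneg_right ht (div_nonneg (by linarith) hγ0.le)
    linarith
  have hm0 : 0 < m := by linarith
  have hroot : γ ^ (1 / γ) ≤ γ := by
    conv_rhs => rw [← Real.rpow_one γ]
    exact Real.rpow_le_rpow_of_exponent_le hγ.le (by rw [div_le_one hγ0]; exact hγ.le)
  have hsplit : γ ^ (t / γ) = γ ^ ((t - 1) / γ) * γ ^ (1 / γ) := by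
    rw [← Real.rpow_add hγ0]; congr 1; ring
  have hA : 0 < γ ^ ((t - 1) / γ) := Real.rpow_pos_of_pos hγ0 _
  -- value of the power of the derivative
  have hpow : ∀ r : ℝ, 0 ≤ r → |γ * r ^ (γ - 1)| ^ (t / γ) = γ ^ (t / γ) * r ^ (m - 1) := by
    intro r hr
    have hr' : 0 ≤ r ^ (γ - 1) := Real.rpow_nonneg hr _
    rw [abs_of_nonneg (by positivity), Real.mul_rpow hγ0.le hr', ← Real.rpow_mul hr]
    congr 2
    rw [hm]; ring
  rcases le_or_gt s k with hsk | hsk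
  · have hPhi : PhiKTG k t γ s = γ ^ (t / γ) * (s ^ m / m) := by
      unfold PhiKTG
      have : ∫ r in (0:ℝ)..s, |hkgDeriv k γ r| ^ (t / γ)
          = ∫ r in (0:ℝ)..s, γ ^ (t / γ) * r ^ (m - 1) := by
        apply intervalIntegral.integral_congr
        intro r hr
        rw [Set.uIcc_of_le hs] at hr
        have h1 : |r| = r := abs_of_nonneg hr.1
        simp only [hkgDeriv, h1, if_pos (hr.2.trans hsk)]
        exact hpow r hr.1
      rw [this, intervalIntegral.integral_const_mul, integral_rpow (Or.inl (by linarith))]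
      rw [sub_add_cancel, Real.zero_rpow hm0.ne', sub_zero]
    have hh : |hkg k γ s| ^ ((1 / γ) * m) = s ^ m := by
      have h1 : hkg k γ s = s ^ γ := by
        unfold hkg
        rw [abs_of_nonneg hs, if_pos hsk]
        rcases hs.eq_or_lt with h0 | h0
        · rw [← h0, mul_zero, Real.zero_rpow hγ0.ne']
        · rw [← Real.rpow_add_one h0.ne']; simp
      rw [h1, abs_of_nonneg (Real.rpow_nonneg hs _), ← Real.rpow_mul hs]
      congr 1
      field_simp
    have hsm : 0 ≤ s ^ m := Real.rpow_nonneg hs _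
    rw [hPhi, hh, abs_of_nonneg (by positivity), hsplit, mul_assoc]
    apply mul_le_mul_of_nonneg_left _ hA.le
    rw [← mul_div_assoc, div_le_iff₀ hm0, mul_comm]
    exact mul_le_mul_of_nonneg_left (hroot.trans hmγ) hsm
  · have hPhi : |PhiKTG k t γ s| ≤ γ ^ (t / γ) * k ^ (m - 1) * s := by
      have := intervalIntegral.norm_integral_le_of_norm_le_const (a := 0) (b := s)
        (f := fun r => |hkgDeriv k γ r| ^ (t / γ)) (C := γ ^ (t / γ) * k ^ (m - 1)) ?_
      · rwa [Real.norm_eq_abs, sub_zero, abs_of_nonneg hs] at this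
      · intro r hr
        rw [Set.uIoc_of_le hs] at hr
        have h1 : |r| = r := abs_of_nonneg hr.1.le
        rw [Real.norm_eq_abs, abs_of_nonneg (Real.rpow_nonneg (abs_nonneg _) _)]
        unfold hkgDeriv
        rw [h1]
        split_ifs with h
        · rw [hpow r hr.1.le]
          apply mul_le_mul_of_nonneg_left _ (Real.rpow_nonneg hγ0.le _)
          exact Real.rpow_le_rpow hr.1.le h (by linarith)
        · rw [hpow k hk0.le]
    have hs0 : 0 < s := hk0.trans hsk
    have hkγ : k ^ γ = k ^ (γ - 1) * k := by
      rw [← Real.rpow_add_one hk0.ne']; simp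
    have hkm : k ^ m = k ^ (m - 1) * k := by
      rw [← Real.rpow_add_one hk0.ne']; simp
    have hx : 1 ≤ γ * (s / k) := by
      have : 1 < s / k := by rwa [one_lt_div hk0]
      nlinarith
    have hlow : k ^ γ * (γ * (s / k)) ≤ |hkg k γ s| := by
      refine le_trans ?_ (le_abs_self _)
      unfold hkg
      rw [abs_of_nonneg hs, if_neg (not_le.mpr hsk), Real.sign_of_pos hs0]
      have h1 : k ^ γ * (γ * (s / k)) = γ * k ^ (γ - 1) * s := by
        rw [hkγ]; field_simp
      have h2 : 0 < k ^ γ := Real.rpow_pos_of_pos hk0 _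
      rw [h1]
      nlinarith
    have hfin : k ^ m * (γ * (s / k)) ≤ |hkg k γ s| ^ ((1 / γ) * m) := by
      have h0 : 0 ≤ k ^ γ := Real.rpow_nonneg hk0.le _
      have he : 1 ≤ (1 / γ) * m := by
        rw [one_div, inv_mul_eq_div, one_le_div hγ0]; exact hmγ
      calc k ^ m * (γ * (s / k))
          ≤ k ^ m * (γ * (s / k)) ^ ((1 / γ) * m) := by
            apply mul_le_mul_of_nonneg_left _ (Real.rpow_nonneg hk0.le _)
            exact Real.self_le_rpow_of_one_le hx he
        _ = (k ^ γ * (γ * (s / k))) ^ ((1 / γ) * m) := by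
            rw [Real.mul_rpow h0 (by linarith), ← Real.rpow_mul hk0.le]
            congr 2
            field_simp
        _ ≤ _ := Real.rpow_le_rpow (mul_nonneg h0 (by linarith)) hlow (by linarith)
    refine hPhi.trans ?_
    rw [hsplit, mul_assoc, mul_assoc]
    apply mul_le_mul_of_nonneg_left _ hA.le
    refine le_trans ?_ hfin
    have h1 : k ^ m * (γ * (s / k)) = γ * (k ^ (m - 1) * s) := by
      rw [hkm]; field_simp
    rw [h1]
    exact mul_le_mul_of_nonneg_right hroot
      (mul_nonneg (Real.rpow_nonneg hk0.le _) hs)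

/-- inequality (2) in the regularity proof: for `k, γ > 1`
and `t ≥ γ`, `|Φ_{k,t,γ}(s)| ≤ C |h_{k,γ}(s)|^{(1/γ)(1 + t(γ-1)/γ)}` with
`C = max{γ^{(t-1)/γ}, γ/(1 + t(γ-1)/γ)}` independent of `k`. -/
theorem statement11 (k γ t : ℝ) (hk : 1 < k) (hγ : 1 < γ) (ht : γ ≤ t) :
    ∀ s : ℝ,
      |PhiKTG k t γ s| ≤
        max (γ ^ ((t - 1) / γ)) (γ / (1 + t * ((γ - 1) / γ))) *
          |hkg k γ s| ^ ((1 / γ) * (1 + t * ((γ - 1) / γ))) := by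
  intro s
  have key : |PhiKTG k t γ s| ≤ γ ^ ((t - 1) / γ) *
      |hkg k γ s| ^ ((1 / γ) * (1 + t * ((γ - 1) / γ))) := by
    rcases le_total 0 s with hs | hs
    · exact aux_nonneg k γ t hk hγ ht s hs
    · have h := aux_nonneg k γ t hk hγ ht (-s) (by linarith)
      rwa [PhiKTG_neg, hkg_neg, abs_neg, abs_neg] at h
  exact key.trans (mul_le_mul_of_nonneg_right (le_max_left _ _)
    (Real.rpow_nonneg (abs_nonneg _) _))
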